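/- For every natural number j and every t in the open interval (jτ, (j+1)τ), the function Φ is differentiable at t and Φ'(t) = -λ · Φ(t) + a · Φ(t - τ). -/

import Mathlib

/-!
On `((n - 1)τ, nτ)` all terms of the series with index at least `n` vanish, so `Φ` is the finite
sum of the smooth functions `g_k(t) = a^k / k! (t - kτ)^k e^{-λ(t - kτ)}` over `k < n`
(`delayFlow_eq_sum`; for `n = 0` this says that `Φ` vanishes on `(-τ, 0)`). Since `g_0' = -λ g_0`
and `g_{k+1}'(t) = -λ g_{k+1}(t) + a g_k(t - τ)`, differentiating the sum for `n = j + 1` at `t`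
produces the sum for `n = j` at `t - τ`, which is `Φ(t - τ)`.
-/

open MeasureTheory

/-- Single-spectral-mode flow of the delayed heat equation:
`Φ(t) = e^{-λt} + ∑_{j≥1} (a^j/j!) (max(t-jτ,0))^j e^{-λ max(t-jτ,0)}` for `t ≥ 0`,
and `Φ(t) = 0` for `t < 0`. -/
noncomputable def delayFlow (a lam τ : ℝ) (t : ℝ) : ℝ :=
  if t < 0 then 0
  else Real.exp (-(lam * t)) +
    ∑' k : ℕ,
      (a ^ (k + 1) / (Nat.factorial (k + 1))) * (max (t - (k + 1) * τ) 0) ^ (k + 1)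
        * Real.exp (-(lam * max (t - (k + 1) * τ) 0))

/-- The `k`-th term of the delay series, without the truncation at `t = kτ`. -/
noncomputable def delayTerm (a lam τ : ℝ) (k : ℕ) (t : ℝ) : ℝ :=
  a ^ k / (Nat.factorial k) * (t - k * τ) ^ k * Real.exp (-(lam * (t - k * τ)))

theorem hasDerivAt_delayTerm_zero (a lam τ t : ℝ) :
    HasDerivAt (delayTerm a lam τ 0) (-lam * delayTerm a lam τ 0 t) t := by
  have h := (((hasDerivAt_id t).const_mul lam).neg).exp
  have e : delayTerm a lam τ 0 = fun x => Real.exp (-(lam * x)) := by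
    funext x
    simp [delayTerm]
  rw [e]
  refine h.congr_deriv ?_
  simp [mul_comm]

theorem hasDerivAt_delayTerm_succ (a lam τ : ℝ) (k : ℕ) (t : ℝ) :
    HasDerivAt (delayTerm a lam τ (k + 1))
      (-lam * delayTerm a lam τ (k + 1) t + a * delayTerm a lam τ k (t - τ)) t := by
  have h0 : HasDerivAt (fun x : ℝ => x - ((k + 1 : ℕ) : ℝ) * τ) 1 t :=
    (hasDerivAt_id t).sub_const _
  have h1 := ((h0.pow (k + 1)).const_mul (a ^ (k + 1) / (Nat.factorial (k + 1) : ℝ))).mul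
    ((h0.const_mul lam).neg.exp)
  refine h1.congr_deriv ?_
  have hs : t - τ - k * τ = t - ((k + 1 : ℕ) : ℝ) * τ := by
    push_cast
    ring
  have hf : (Nat.factorial k : ℝ) ≠ 0 := by positivity
  have hk : (k : ℝ) + 1 ≠ 0 := by positivity
  simp only [delayTerm, hs, Pi.pow_apply, Pi.neg_apply, Nat.add_sub_cancel]
  generalize t - ((k + 1 : ℕ) : ℝ) * τ = s
  rw [Nat.factorial_succ]
  push_cast
  field_simp
  ring

theorem delayFlow_eq_sum (a lam τ : ℝ) (hτ : 0 < τ) (n : ℕ) (t : ℝ)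
    (h1 : ((n : ℝ) - 1) * τ < t) (h2 : t < n * τ) :
    delayFlow a lam τ t = ∑ k ∈ Finset.range n, delayTerm a lam τ k t := by
  cases n with
  | zero =>
    have : t < 0 := by simpa using h2
    simp [delayFlow, this]
  | succ m =>
    push_cast at h1 h2
    have hm : (m : ℝ) * τ < t := by linarith
    have ht : ¬ t < 0 := by
      have : 0 ≤ (m : ℝ) * τ := by positivity
      linarith
    rw [delayFlow, if_neg ht, Finset.sum_range_succ', add_comm]
    congr 1
    · rw [tsum_eq_sum (s := Finset.range m)]
      · refine Finset.sum_congr rfl fun k hk => ?_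
        have hk' : (k : ℝ) + 1 ≤ m := by exact_mod_cast Finset.mem_range.1 hk
        have : 0 ≤ t - ((k : ℝ) + 1) * τ := by nlinarith
        rw [max_eq_left this]
        simp [delayTerm]
      · intro k hk
        have hk' : (m : ℝ) ≤ k := by exact_mod_cast not_lt.1 (Finset.mem_range.not.1 hk)
        have : t - ((k : ℝ) + 1) * τ ≤ 0 := by nlinarith
        rw [max_eq_right this]
        simp
    · simp [delayTerm]

/-- On each open interval `(jτ, (j+1)τ)`, `Φ` is differentiable and solves the delay
ODE `Φ'(t) = -λ Φ(t) + a Φ(t - τ)`. -/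
theorem stmt_9 (a lam τ : ℝ) (hτ : 0 < τ) (j : ℕ) (t : ℝ)
    (ht : t ∈ Set.Ioo ((j : ℝ) * τ) (((j : ℝ) + 1) * τ)) :
    HasDerivAt (delayFlow a lam τ)
      (-lam * delayFlow a lam τ t + a * delayFlow a lam τ (t - τ)) t := by
  have hj : (((j + 1 : ℕ) : ℝ) - 1) * τ < t := by
    push_cast
    linarith [ht.1]
  have hj' : t < ((j + 1 : ℕ) : ℝ) * τ := by
    push_cast
    exact ht.2
  have hev : delayFlow a lam τ =ᶠ[nhds t]
      fun x => ∑ k ∈ Finset.range (j + 1), delayTerm a lam τ k x := by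
    filter_upwards [Ioo_mem_nhds hj hj'] with x hx
    exact delayFlow_eq_sum a lam τ hτ (j + 1) x hx.1 hx.2
  refine HasDerivAt.congr_of_eventuallyEq ?_ hev
  rw [hev.eq_of_nhds, delayFlow_eq_sum a lam τ hτ j (t - τ) (by linarith [ht.1])
    (by linarith [ht.2])]
  simp only [Finset.sum_range_succ']
  refine ((HasDerivAt.fun_sum fun k _ => hasDerivAt_delayTerm_succ a lam τ k t).add
    (hasDerivAt_delayTerm_zero a lam τ t)).congr_deriv ?_
  rw [Finset.sum_add_distrib, ← Finset.mul_sum, ← Finset.mul_sum]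
  ring
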